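/- Let G=(V,E) be a graph with positive edge weights (w_{ij}) (no multiple edges) and integer capacity constraints b = (b_i)_{i∈V}, such that the primal LP for maximum weight b-matching has a unique optimum and this optimum is integral. Then the instance possesses a Nash bargaining solution: there exists a trade outcome (M, Γ) that is both stable and balanced. -/

import Mathlib

namespace EN

open Finset

variable {V : Type*}

/-- The nonnegative part `(x)₊ = max (x, 0)`. -/
noncomputable def pos (x : ℝ) : ℝ := max x 0

variable [Fintype V] [DecidableEq V]

/-- The maximum of `f` over a finite set of vertices (`0` over the empty set). -/
noncomputable def fmax (s : Finset V) (f : V → ℝ) : ℝ := ⨆ k ∈ s, f k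

/-- The offer from `i` to `j` given messages `α` and weights `w`:
`m_{i→j} = (w_{ij} − α_{i\j})₊ − (1/2) (w_{ij} − α_{i\j} − α_{j\i})₊`. -/
noncomputable def offer (w α : V → V → ℝ) (i j : V) : ℝ :=
  pos (w i j - α i j) - (1 / 2) * pos (w i j - α i j - α j i)

/-- The update operator `T` of the natural dynamics:
`(Tα)_{i\j} = max_{k ∈ ∂i \ j} m_{k→i}`. -/
noncomputable def upd (G : SimpleGraph V) [DecidableRel G.Adj] (w α : V → V → ℝ)
    (i j : V) : ℝ :=
  fmax ((G.neighborFinset i).erase j) fun k => offer w α k i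

/-- The earnings estimate `γ_i = max_{k ∈ ∂i} m_{k→i}`. -/
noncomputable def earn (G : SimpleGraph V) [DecidableRel G.Adj] (w α : V → V → ℝ)
    (i : V) : ℝ :=
  fmax (G.neighborFinset i) fun k => offer w α k i

/-- Exchange network weights: symmetric and positive on every edge. -/
def GoodW (G : SimpleGraph V) (w : V → V → ℝ) : Prop :=
  (∀ i j, w i j = w j i) ∧ ∀ i j, G.Adj i j → 0 < w i j

/-- A valid message vector: nonnegative on all directed edges. -/
def ValidMsg (G : SimpleGraph V) (α : V → V → ℝ) : Prop :=
  ∀ i j, G.Adj i j → 0 ≤ α i j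

/-- Fixed point of the natural-dynamics update operator. -/
def IsFixedPt (G : SimpleGraph V) [DecidableRel G.Adj] (w α : V → V → ℝ) : Prop :=
  ∀ i j, G.Adj i j → upd G w α i j = α i j

/-- `ε`-fixed point. -/
def IsEpsFixedPt (G : SimpleGraph V) [DecidableRel G.Adj] (w α : V → V → ℝ) (ε : ℝ) : Prop :=
  ∀ i j, G.Adj i j → |α i j - upd G w α i j| ≤ ε

/-- The natural dynamics with damping factor `κ`: `α^{t+1} = (1−κ) α^t + κ T α^t`. -/
noncomputable def dyn (G : SimpleGraph V) [DecidableRel G.Adj] (w : V → V → ℝ) (κ : ℝ)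
    (α0 : V → V → ℝ) : ℕ → V → V → ℝ
  | 0 => α0
  | t + 1 => fun i j =>
      (1 - κ) * dyn G w κ α0 t i j + κ * upd G w (dyn G w κ α0 t) i j

/-- Sup norm over directed edges. -/
noncomputable def msgSup (G : SimpleGraph V) [DecidableRel G.Adj] (f : V → V → ℝ) : ℝ :=
  ⨆ p : V × V, if G.Adj p.1 p.2 then |f p.1 p.2| else 0

/-- `M` is a matching of `G`: a symmetric subrelation of adjacency pairing each node
with at most one partner. -/
structure IsMatching (G : SimpleGraph V) (M : V → V → Prop) : Prop where
  subset : ∀ i j, M i j → G.Adj i j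
  symm : ∀ i j, M i j → M j i
  unique : ∀ i j k, M i j → M i k → j = k

/-- `(M, γ)` is a trade outcome. -/
def IsOutcome (G : SimpleGraph V) (w : V → V → ℝ) (M : V → V → Prop) (γ : V → ℝ) : Prop :=
  IsMatching G M ∧ (∀ i, 0 ≤ γ i) ∧ (∀ i j, M i j → γ i + γ j = w i j) ∧
    ∀ i, (∀ j, ¬M i j) → γ i = 0

/-- Stability of an outcome. -/
def Stable (G : SimpleGraph V) (w : V → V → ℝ) (M : V → V → Prop) (γ : V → ℝ) : Prop :=
  ∀ i j, G.Adj i j → ¬M i j → w i j ≤ γ i + γ j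

/-- The best alternative of `i` excluding `j`: `max_{k ∈ ∂i \ j} (w_{ik} − γ_k)₊`. -/
noncomputable def bestAlt (G : SimpleGraph V) [DecidableRel G.Adj] (w : V → V → ℝ)
    (γ : V → ℝ) (i j : V) : ℝ :=
  fmax ((G.neighborFinset i).erase j) fun k => pos (w i k - γ k)

/-- Balance of an outcome. -/
def Balanced (G : SimpleGraph V) [DecidableRel G.Adj] (w : V → V → ℝ) (M : V → V → Prop)
    (γ : V → ℝ) : Prop :=
  ∀ i j, M i j → γ i - bestAlt G w γ i j = γ j - bestAlt G w γ j i

/-- Nash bargaining solution: a stable and balanced trade outcome. -/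
def IsNBSolution (G : SimpleGraph V) [DecidableRel G.Adj] (w : V → V → ℝ)
    (M : V → V → Prop) (γ : V → ℝ) : Prop :=
  IsOutcome G w M γ ∧ Stable G w M γ ∧ Balanced G w M γ

/-- `ε`-balance. -/
def EpsBalanced (G : SimpleGraph V) [DecidableRel G.Adj] (w : V → V → ℝ)
    (M : V → V → Prop) (γ : V → ℝ) (ε : ℝ) : Prop :=
  ∀ i j, M i j → |(γ i - bestAlt G w γ i j) - (γ j - bestAlt G w γ j i)| ≤ ε

/-- `ε`-Nash bargaining solution. -/
def IsEpsNB (G : SimpleGraph V) [DecidableRel G.Adj] (w : V → V → ℝ)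
    (M : V → V → Prop) (γ : V → ℝ) (ε : ℝ) : Prop :=
  IsOutcome G w M γ ∧ Stable G w M γ ∧ EpsBalanced G w M γ ε

/-- Feasible point of the LP relaxation of maximum weight matching. -/
def LPFeasible (G : SimpleGraph V) [DecidableRel G.Adj] (x : V → V → ℝ) : Prop :=
  (∀ i j, x i j = x j i) ∧ (∀ i j, 0 ≤ x i j) ∧ (∀ i j, ¬G.Adj i j → x i j = 0) ∧
    ∀ i, ∑ j ∈ G.neighborFinset i, x i j ≤ 1

/-- LP objective `Σ_{(i,j)∈E} w_{ij} x_{ij}` (each undirected edge counted once). -/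
noncomputable def LPval (G : SimpleGraph V) [DecidableRel G.Adj] (w x : V → V → ℝ) : ℝ :=
  (1 / 2) * ∑ i, ∑ j ∈ G.neighborFinset i, w i j * x i j

/-- Optimal point of the LP relaxation of maximum weight matching. -/
def LPOptimal (G : SimpleGraph V) [DecidableRel G.Adj] (w x : V → V → ℝ) : Prop :=
  LPFeasible G x ∧ ∀ y, LPFeasible G y → LPval G w y ≤ LPval G w x

def Integral (x : V → V → ℝ) : Prop := ∀ i j, x i j = 0 ∨ x i j = 1

def HalfIntegral (x : V → V → ℝ) : Prop := ∀ i j, x i j = 0 ∨ x i j = 1 / 2 ∨ x i j = 1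

open Classical in
/-- The LP point associated to a matching. -/
noncomputable def mInd (M : V → V → Prop) (i j : V) : ℝ := if M i j then 1 else 0

/-- The state with offers `m` induces the matching `M`: every node receiving a positive
offer is matched and receives its unique best offer from its partner, and every node
with zero earnings is unmatched. -/
def Induces (G : SimpleGraph V) [DecidableRel G.Adj] (m : V → V → ℝ)
    (M : V → V → Prop) : Prop :=
  IsMatching G M ∧
    (∀ i, (∃ k, G.Adj i k ∧ 0 < m k i) →
      ∃ j, M i j ∧ ∀ k, G.Adj i k → k ≠ j → m k i < m j i) ∧
    ∀ i, (fmax (G.neighborFinset i) fun k => m k i) = 0 → ∀ j, ¬M i j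

/-- Feasibility for the dual LP. -/
def DualFeasible (G : SimpleGraph V) (w : V → V → ℝ) (y : V → ℝ) : Prop :=
  (∀ i, 0 ≤ y i) ∧ ∀ i j, G.Adj i j → w i j ≤ y i + y j

/-- Optimality for the dual LP. -/
def DualOptimal (G : SimpleGraph V) (w : V → V → ℝ) (y : V → ℝ) : Prop :=
  DualFeasible G w y ∧ ∀ z, DualFeasible G w z → ∑ i, y i ≤ ∑ i, z i

/-- The unmatched balance property at every edge. -/
def UnmatchedBalance (G : SimpleGraph V) [DecidableRel G.Adj] (w : V → V → ℝ)
    (y : V → ℝ) : Prop :=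
  ∀ i j, G.Adj i j → y i - bestAlt G w y i j = y j - bestAlt G w y j i

/-! ### Unequal division -/

/-- Valid split fractions: `r_{ij} ∈ (0,1)` with `r_{ij} + r_{ji} = 1` on every edge. -/
def GoodR (G : SimpleGraph V) (r : V → V → ℝ) : Prop :=
  ∀ i j, G.Adj i j → 0 < r i j ∧ r i j < 1 ∧ r i j + r j i = 1

/-- The UD offer from `i` to `j`. -/
noncomputable def offerUD (w r α : V → V → ℝ) (i j : V) : ℝ :=
  pos (w i j - α i j) - r i j * pos (w i j - α i j - α j i)

/-- The UD update operator. -/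
noncomputable def updUD (G : SimpleGraph V) [DecidableRel G.Adj] (w r α : V → V → ℝ)
    (i j : V) : ℝ :=
  fmax ((G.neighborFinset i).erase j) fun k => offerUD w r α k i

/-- The UD earnings estimate. -/
noncomputable def earnUD (G : SimpleGraph V) [DecidableRel G.Adj] (w r α : V → V → ℝ)
    (i : V) : ℝ :=
  fmax (G.neighborFinset i) fun k => offerUD w r α k i

/-- Fixed point of the UD update operator. -/
def IsFixedPtUD (G : SimpleGraph V) [DecidableRel G.Adj] (w r α : V → V → ℝ) : Prop :=
  ∀ i j, G.Adj i j → updUD G w r α i j = α i j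

/-- Correct division. -/
def CorrectDiv (G : SimpleGraph V) [DecidableRel G.Adj] (w r : V → V → ℝ)
    (M : V → V → Prop) (γ : V → ℝ) : Prop :=
  ∀ i j, M i j →
    (1 / r i j) * (γ i - bestAlt G w γ i j) = (1 / r j i) * (γ j - bestAlt G w γ j i)

/-- UD solution: a stable trade outcome satisfying correct division. -/
def IsUDSolution (G : SimpleGraph V) [DecidableRel G.Adj] (w r : V → V → ℝ)
    (M : V → V → Prop) (γ : V → ℝ) : Prop :=
  IsOutcome G w M γ ∧ Stable G w M γ ∧ CorrectDiv G w r M γ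

/-- Edge surplus. -/
noncomputable def surp (G : SimpleGraph V) [DecidableRel G.Adj] (w : V → V → ℝ)
    (γ : V → ℝ) (i j : V) : ℝ :=
  w i j - bestAlt G w γ i j - bestAlt G w γ j i

open Classical in
/-- The rebalanced allocation `γ^reb`. -/
noncomputable def reb (G : SimpleGraph V) [DecidableRel G.Adj] (w r : V → V → ℝ)
    (M : V → V → Prop) (γ : V → ℝ) (i : V) : ℝ :=
  if h : ∃ j, M i j then
    bestAlt G w γ i h.choose + r i h.choose * surp G w γ i h.choose
  else 0

/-- The Edge Rebalancing iteration `γ^{t+1} = κ γ^reb(γ^t) + (1−κ) γ^t`. -/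
noncomputable def rebIter (G : SimpleGraph V) [DecidableRel G.Adj] (w r : V → V → ℝ)
    (M : V → V → Prop) (κ : ℝ) (γ0 : V → ℝ) : ℕ → V → ℝ
  | 0 => γ0
  | t + 1 => fun i =>
      κ * reb G w r M (rebIter G w r M κ γ0 t) i + (1 - κ) * rebIter G w r M κ γ0 t i

/-- Degree of `i` in the relation `M`. -/
noncomputable def bdeg {V : Type*} (M : V → V → Prop) (i : V) : ℕ := {j | M i j}.ncard

/-- `M` is a `b`-matching of `G`. -/
def IsBMatching {V : Type*} (G : SimpleGraph V) (b : V → ℕ) (M : V → V → Prop) : Prop :=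
  (∀ i j, M i j → G.Adj i j) ∧ (∀ i j, M i j → M j i) ∧ ∀ i, bdeg M i ≤ b i

open Classical in
/-- The earnings `γ_i` of node `i` under the outcome `(M, Γ)`: the minimum incoming
payoff over partners if `i` is saturated, and `0` otherwise. -/
noncomputable def bEarn {V : Type*} (b : V → ℕ) (M : V → V → Prop) (Γ : V → V → ℝ)
    (i : V) : ℝ :=
  if bdeg M i = b i then sInf {x : ℝ | ∃ j, M i j ∧ x = Γ j i} else 0

/-- The `b`-th largest value of `f` over the finite vertex set `s`
(`0` if `s` has fewer than `b` elements or `b = 0`). -/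
noncomputable def bmax {V : Type*} (b : ℕ) (s : Finset V) (f : V → ℝ) : ℝ :=
  if b ≠ 0 ∧ b ≤ s.card then ((s.val.map f).sort (· ≤ ·)).getD (s.card - b) 0 else 0

/-- `(M, Γ)` is a trade outcome for the instance with capacities `b`. -/
def IsBOutcome {V : Type*} (G : SimpleGraph V) (w : V → V → ℝ) (b : V → ℕ)
    (M : V → V → Prop) (Γ : V → V → ℝ) : Prop :=
  IsBMatching G b M ∧ (∀ i j, ¬M i j → Γ i j = 0) ∧
    ∀ i j, M i j → 0 ≤ Γ i j ∧ Γ i j + Γ j i = w i j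

/-- Stability of a trade outcome with capacities. -/
def BStable {V : Type*} (G : SimpleGraph V) (w : V → V → ℝ) (b : V → ℕ)
    (M : V → V → Prop) (Γ : V → V → ℝ) : Prop :=
  ∀ i j, G.Adj i j → ¬M i j → w i j ≤ bEarn b M Γ i + bEarn b M Γ j

/-- Balance of a trade outcome with capacities. -/
def BBalanced {V : Type*} [Fintype V] [DecidableEq V] (G : SimpleGraph V)
    [DecidableRel G.Adj] (w : V → V → ℝ) (b : V → ℕ)
    (M : V → V → Prop) (Γ : V → V → ℝ) : Prop :=
  ∀ i j, M i j →
    Γ j i - bmax (b i) ((G.neighborFinset i).erase j)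
        (fun k => pos (w i k - bEarn b M Γ k)) =
      Γ i j - bmax (b j) ((G.neighborFinset j).erase i)
        (fun l => pos (w j l - bEarn b M Γ l))

/-- Feasible point of the primal LP for maximum weight `b`-matching. -/
def BLPFeasible {V : Type*} [Fintype V] [DecidableEq V] (G : SimpleGraph V)
    [DecidableRel G.Adj] (b : V → ℕ) (x : V → V → ℝ) : Prop :=
  (∀ i j, x i j = x j i) ∧ (∀ i j, 0 ≤ x i j) ∧ (∀ i j, x i j ≤ 1) ∧
    (∀ i j, ¬G.Adj i j → x i j = 0) ∧
    ∀ i, ∑ j ∈ G.neighborFinset i, x i j ≤ (b i : ℝ)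

/-- Optimal point of the primal LP for maximum weight `b`-matching. -/
def BLPOptimal {V : Type*} [Fintype V] [DecidableEq V] (G : SimpleGraph V)
    [DecidableRel G.Adj] (w : V → V → ℝ) (b : V → ℕ) (x : V → V → ℝ) : Prop :=
  BLPFeasible G b x ∧ ∀ y, BLPFeasible G b y → LPval G w y ≤ LPval G w x

theorem lt_bmax_iff {V : Type*} (b : ℕ) (s : Finset V) (f : V → ℝ) (hb : b ≠ 0)
    (hs : b ≤ s.card) (c : ℝ) : c < bmax b s f ↔ b ≤ (s.filter (fun k => c < f k)).card := by
  classical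
  have h0 : bmax b s f = ((s.val.map f).sort (· ≤ ·)).getD (s.card - b) 0 := by
    unfold bmax; rw [if_pos ⟨hb, hs⟩]
  set l := (s.val.map f).sort (· ≤ ·) with hl
  have hlen : l.length = s.card := by simp [hl]
  have hcount : (s.filter (fun k => c < f k)).card = l.countP (fun x => decide (c < x)) := by
    have : (l : Multiset ℝ) = s.val.map f := by simp [hl]
    rw [← Multiset.coe_countP, this, Multiset.countP_map]
    rfl
  have hsort : l.Pairwise (· ≤ ·) := by
    rw [hl]; exact Multiset.pairwise_sort _ _
  have hlt : s.card - b < l.length := by omega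
  rw [h0, hcount, List.getD_eq_getElem _ _ hlt]
  rw [List.pairwise_iff_getElem] at hsort
  constructor
  · intro h
    rw [← List.take_append_drop (s.card - b) l, List.countP_append]
    have : (l.drop (s.card - b)).countP (fun x => decide (c < x)) = (l.drop (s.card - b)).length := by
      rw [List.countP_eq_length]
      intro a ha
      rw [List.mem_iff_getElem] at ha
      obtain ⟨n, hn, rfl⟩ := ha
      rw [List.getElem_drop]
      simp only [decide_eq_true_eq]
      refine lt_of_lt_of_le h ?_
      rcases Nat.eq_zero_or_pos n with rfl | hpos
      · simp
      · exact hsort _ _ _ _ (by omega)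
    rw [this, List.length_drop]
    omega
  · intro h
    by_contra hc
    push Not at hc
    rw [← List.take_append_drop (s.card - b + 1) l, List.countP_append] at h
    have h1 : (l.take (s.card - b + 1)).countP (fun x => decide (c < x)) = 0 := by
      rw [List.countP_eq_zero]
      intro a ha
      rw [List.mem_iff_getElem] at ha
      obtain ⟨n, hn, rfl⟩ := ha
      rw [List.length_take] at hn
      rw [List.getElem_take]
      simp only [decide_eq_true_eq, not_lt]
      refine le_trans ?_ hc
      rcases Nat.eq_or_lt_of_le (show n ≤ s.card - b by omega) with rfl | hpos
      · exact le_rfl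
      · exact hsort _ _ _ _ hpos
    have h2 := List.countP_le_length (p := fun x => decide (c < x)) (l := l.drop (s.card - b + 1))
    rw [List.length_drop] at h2
    omega

theorem le_bmax {V : Type*} {b : ℕ} {s : Finset V} {f : V → ℝ} (hb : b ≠ 0) {c : ℝ}
    (t : Finset V) (hts : t ⊆ s) (ht : b ≤ t.card) (h : ∀ k ∈ t, c ≤ f k) : c ≤ bmax b s f := by
  refine le_of_forall_lt fun c' hc' => ?_
  rw [lt_bmax_iff b s f hb (ht.trans (Finset.card_le_card hts))]
  refine ht.trans (Finset.card_le_card fun k hk => ?_)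
  rw [Finset.mem_filter]
  exact ⟨hts hk, hc'.trans_le (h k hk)⟩

theorem bmax_le {V : Type*} {b : ℕ} {s : Finset V} {f : V → ℝ} {c : ℝ} (hc : 0 ≤ c)
    (h : (s.filter (fun k => c < f k)).card < b) : bmax b s f ≤ c := by
  by_cases hs : b ≤ s.card
  · by_contra hlt
    push Not at hlt
    rw [lt_bmax_iff b s f (by omega) hs] at hlt
    omega
  · unfold bmax
    rw [if_neg (by tauto)]
    exact hc

theorem bmax_nonneg {V : Type*} {b : ℕ} {s : Finset V} {f : V → ℝ} (hf : ∀ k, 0 ≤ f k) :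
    0 ≤ bmax b s f := by
  by_cases hs : b ≠ 0 ∧ b ≤ s.card
  · exact le_bmax hs.1 s subset_rfl hs.2 (fun k _ => hf k)
  · unfold bmax
    rw [if_neg hs]

theorem bmax_le_add {V : Type*} {b : ℕ} (hb : b ≠ 0) {s : Finset V} {f g : V → ℝ} {ε : ℝ}
    (hg : ∀ k, 0 ≤ g k) (hε : 0 ≤ ε) (h : ∀ k, f k ≤ g k + ε) :
    bmax b s f ≤ bmax b s g + ε := by
  have h0 := bmax_nonneg (b := b) (s := s) hg
  refine bmax_le (by positivity) ?_
  by_contra hcard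
  push Not at hcard
  have hsub : s.filter (fun k => bmax b s g + ε < f k) ⊆ s.filter (fun k => bmax b s g < g k) := by
    intro k hk
    rw [Finset.mem_filter] at hk ⊢
    exact ⟨hk.1, by linarith [h k, hk.2]⟩
  have h1 := hcard.trans (Finset.card_le_card hsub)
  have h2 := (lt_bmax_iff b s g hb (h1.trans (Finset.card_filter_le _ _)) (bmax b s g)).2 h1
  exact lt_irrefl _ h2

theorem bmax_abs {V : Type*} {b : ℕ} (hb : b ≠ 0) {s : Finset V} {f g : V → ℝ} {ε : ℝ}
    (hf : ∀ k, 0 ≤ f k) (hg : ∀ k, 0 ≤ g k) (hε : 0 ≤ ε) (h : ∀ k, |f k - g k| ≤ ε) :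
    |bmax b s f - bmax b s g| ≤ ε := by
  have h1 := bmax_le_add (s := s) hb hg hε (fun k => by have := (abs_le.1 (h k)).2; linarith : ∀ k, f k ≤ g k + ε)
  have h2 := bmax_le_add (s := s) hb hf hε (fun k => by have := (abs_le.1 (h k)).1; linarith : ∀ k, g k ≤ f k + ε)
  rw [abs_le]; constructor <;> linarith

/-- Fixed points of nonexpansive self-maps of compact convex sets. -/
theorem nonexp_fixed {E : Type*} [NormedAddCommGroup E] [NormedSpace ℝ E] (K : Set E)
    (hK : IsCompact K) (hc : Convex ℝ K) (hne : K.Nonempty) (T : E → E)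
    (hT : ∀ x ∈ K, T x ∈ K) (hn : ∀ x y, ‖T x - T y‖ ≤ ‖x - y‖) : ∃ x ∈ K, T x = x := by
  have hTc : Continuous T := by
    refine (LipschitzWith.of_dist_le_mul (K := 1) fun x y => ?_).continuous
    simpa [dist_eq_norm] using hn x y
  obtain ⟨x, hx, hmin⟩ := hK.exists_isMinOn hne
    (f := fun x => ‖T x - x‖) (by fun_prop)
  refine ⟨x, hx, ?_⟩
  obtain ⟨C, hC⟩ := hK.isBounded.exists_norm_le
  obtain ⟨x0, hx0⟩ := hne
  have key : ∀ n : ℕ, ‖T x - x‖ ≤ (2 * C) * (1 / ((n : ℝ) + 1)) := by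
    intro n
    set t : ℝ := 1 / ((n : ℝ) + 1) with ht
    have htpos : 0 < t := by positivity
    have ht1 : t ≤ 1 := by
      rw [ht, div_le_one (by positivity)]; linarith [(Nat.cast_nonneg n : (0:ℝ) ≤ n)]
    let S : E → E := fun x => (1 - t) • T x + t • x0
    have hS : Set.MapsTo S K K := fun x hx =>
      hc (hT x hx) hx0 (by linarith) htpos.le (by ring)
    have hcon : ContractingWith (Real.toNNReal (1 - t)) (hS.restrict S K K) := by
      refine ⟨?_, ?_⟩
      · rw [Real.toNNReal_lt_one]; linarith
      · refine LipschitzWith.of_dist_le_mul fun a b => ?_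
        change dist (S a) (S b) ≤ (Real.toNNReal (1 - t) : ℝ) * dist (a : E) b
        rw [Real.coe_toNNReal _ (by linarith), dist_eq_norm, dist_eq_norm]
        have : S a - S b = (1 - t) • (T a - T b) := by
          simp only [S, smul_sub]; abel
        rw [this, norm_smul, Real.norm_of_nonneg (by linarith)]
        exact mul_le_mul_of_nonneg_left (hn _ _) (by linarith)
    obtain ⟨z, hz, hfix, -⟩ := hcon.exists_fixedPoint' hK.isComplete hS hx0 (edist_ne_top _ _)
    have hfix : (1 - t) • T z + t • x0 = z := hfix
    have e : T z - z = t • (T z - x0) := by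
      have h1 : T z - ((1 - t) • T z + t • x0) = t • (T z - x0) := by
        simp only [sub_smul, one_smul, smul_sub]; abel
      rwa [hfix] at h1
    calc ‖T x - x‖ ≤ ‖T z - z‖ := hmin hz
      _ = t * ‖T z - x0‖ := by rw [e, norm_smul, Real.norm_of_nonneg htpos.le]
      _ ≤ t * (2 * C) := by
        refine mul_le_mul_of_nonneg_left ?_ htpos.le
        refine (norm_sub_le _ _).trans ?_
        linarith [hC _ (hT z hz), hC _ hx0]
      _ = _ := by ring
  have hlim : Filter.Tendsto (fun n : ℕ => (2 * C) * (1 / ((n : ℝ) + 1))) Filter.atTop (nhds ((2 * C) * 0)) :=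
    tendsto_one_div_add_atTop_nhds_zero_nat.const_mul _
  have := ge_of_tendsto' hlim key
  rw [mul_zero] at this
  exact sub_eq_zero.1 (norm_le_zero_iff.1 this)

theorem bEarn_unsat {V : Type*} {b : V → ℕ} {M : V → V → Prop} {Γ : V → V → ℝ} {i : V}
    (h : bdeg M i ≠ b i) : bEarn b M Γ i = 0 := by
  unfold bEarn; rw [if_neg h]

section
variable {V : Type*} [Fintype V] {b : V → ℕ} {M : V → V → Prop}

theorem exists_of_sat (hb : ∀ i, 1 ≤ b i) {i : V} (h : bdeg M i = b i) : ∃ j, M i j := by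
  have h1 : 0 < {j | M i j}.ncard := by
    have := hb i; unfold bdeg at h; omega
  exact Set.nonempty_of_ncard_ne_zero h1.ne'

theorem bEarn_finite (Γ : V → V → ℝ) (i : V) : {x : ℝ | ∃ j, M i j ∧ x = Γ j i}.Finite :=
  (Set.finite_range (fun j => Γ j i)).subset (by rintro x ⟨j, -, rfl⟩; exact ⟨j, rfl⟩)

theorem le_bEarn (hb : ∀ i, 1 ≤ b i) {Γ : V → V → ℝ} {i : V} (h : bdeg M i = b i) {c : ℝ}
    (hc : ∀ j, M i j → c ≤ Γ j i) : c ≤ bEarn b M Γ i := by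
  unfold bEarn; rw [if_pos h]
  obtain ⟨j, hj⟩ := exists_of_sat hb h
  refine le_csInf ⟨_, j, hj, rfl⟩ ?_
  rintro x ⟨k, hk, rfl⟩
  exact hc k hk

theorem bEarn_le {Γ : V → V → ℝ} {i j : V} (h : bdeg M i = b i) (hj : M i j) :
    bEarn b M Γ i ≤ Γ j i := by
  unfold bEarn; rw [if_pos h]
  exact csInf_le (bEarn_finite Γ i).bddBelow ⟨j, hj, rfl⟩

theorem bEarn_le_add (hb : ∀ i, 1 ≤ b i) {Γ Γ' : V → V → ℝ} {ε : ℝ} (hε : 0 ≤ ε)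
    (h : ∀ i j, Γ i j ≤ Γ' i j + ε) (i : V) : bEarn b M Γ i ≤ bEarn b M Γ' i + ε := by
  by_cases hs : bdeg M i = b i
  · have : bEarn b M Γ i - ε ≤ bEarn b M Γ' i := le_bEarn hb hs fun j hj => by
      linarith [bEarn_le (Γ := Γ) hs hj, h j i]
    linarith
  · rw [bEarn_unsat hs, bEarn_unsat hs]; linarith

theorem bEarn_abs (hb : ∀ i, 1 ≤ b i) {Γ Γ' : V → V → ℝ} {ε : ℝ} (hε : 0 ≤ ε)
    (h : ∀ i j, |Γ i j - Γ' i j| ≤ ε) (i : V) : |bEarn b M Γ i - bEarn b M Γ' i| ≤ ε := by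
  have h1 := bEarn_le_add (M := M) hb (Γ := Γ) (Γ' := Γ') hε
    (fun i j => by linarith [(abs_le.1 (h i j)).2]) i
  have h2 := bEarn_le_add (M := M) hb (Γ := Γ') (Γ' := Γ) hε
    (fun i j => by linarith [(abs_le.1 (h i j)).1]) i
  rw [abs_le]; constructor <;> linarith

theorem norm_entry (Γ Γ' : V → V → ℝ) (i j : V) : |Γ i j - Γ' i j| ≤ ‖Γ - Γ'‖ :=
  (norm_le_pi_norm ((Γ - Γ') i) j).trans (norm_le_pi_norm (Γ - Γ') i)

theorem bEarn_cont (hb : ∀ i, 1 ≤ b i) (i : V) :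
    Continuous (fun Γ : V → V → ℝ => bEarn b M Γ i) := by
  refine (LipschitzWith.of_dist_le_mul (K := 1) fun x y => ?_).continuous
  rw [dist_eq_norm, dist_eq_norm]
  simpa using bEarn_abs (M := M) hb (norm_nonneg (x - y)) (norm_entry x y) i

theorem pos_nonneg (x : ℝ) : 0 ≤ pos x := le_max_right _ _
theorem le_pos (x : ℝ) : x ≤ pos x := le_max_left _ _
theorem pos_abs (x y : ℝ) : |pos x - pos y| ≤ |x - y| := by
  unfold pos; exact abs_max_sub_max_le_abs x y 0
end

/-- best alternative -/
noncomputable def balt {V : Type*} [Fintype V] [DecidableEq V] (G : SimpleGraph V)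
    [DecidableRel G.Adj] (w : V → V → ℝ) (b : V → ℕ) (M : V → V → Prop) (Γ : V → V → ℝ)
    (i j : V) : ℝ :=
  bmax (b i) ((G.neighborFinset i).erase j) (fun k => pos (w i k - bEarn b M Γ k))

open Classical in
noncomputable def brebal {V : Type*} [Fintype V] [DecidableEq V] (G : SimpleGraph V)
    [DecidableRel G.Adj] (w : V → V → ℝ) (b : V → ℕ) (M : V → V → Prop) (Γ : V → V → ℝ)
    (j i : V) : ℝ :=
  if M i j then (1 / 2) * (w i j + balt G w b M Γ i j - balt G w b M Γ j i) else 0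

section
variable {V : Type*} [Fintype V] [DecidableEq V] {G : SimpleGraph V} [DecidableRel G.Adj]
  {w : V → V → ℝ} {b : V → ℕ} {M : V → V → Prop}

theorem balt_nonneg (Γ : V → V → ℝ) (i j : V) : 0 ≤ balt G w b M Γ i j :=
  bmax_nonneg fun _ => pos_nonneg _

theorem balt_abs (hb : ∀ i, 1 ≤ b i) {Γ Γ' : V → V → ℝ} {ε : ℝ} (hε : 0 ≤ ε)
    (h : ∀ i j, |Γ i j - Γ' i j| ≤ ε) (i j : V) :
    |balt G w b M Γ i j - balt G w b M Γ' i j| ≤ ε := by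
  refine bmax_abs (by have := hb i; omega) (fun _ => pos_nonneg _) (fun _ => pos_nonneg _) hε ?_
  intro k
  refine (pos_abs _ _).trans ?_
  have := bEarn_abs (M := M) hb hε h k
  rw [abs_sub_comm] at this
  refine le_trans (le_of_eq ?_) this
  congr 1
  ring

theorem brebal_nonexp (hb : ∀ i, 1 ≤ b i) (Γ Γ' : V → V → ℝ) :
    ‖brebal G w b M Γ - brebal G w b M Γ'‖ ≤ ‖Γ - Γ'‖ := by
  rw [pi_norm_le_iff_of_nonneg (norm_nonneg _)]
  intro j
  rw [pi_norm_le_iff_of_nonneg (norm_nonneg _)]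
  intro i
  change |brebal G w b M Γ j i - brebal G w b M Γ' j i| ≤ _
  unfold brebal
  split_ifs
  · have h1 := abs_le.1 (balt_abs (G := G) (w := w) (M := M) hb (norm_nonneg (Γ - Γ')) (norm_entry Γ Γ') i j)
    have h2 := abs_le.1 (balt_abs (G := G) (w := w) (M := M) hb (norm_nonneg (Γ - Γ')) (norm_entry Γ Γ') j i)
    rw [abs_le]; constructor <;> linarith [h1.1, h1.2, h2.1, h2.2]
  · simp

theorem bEarn_le' {Γ : V → V → ℝ} (hO : IsBOutcome G w b M Γ) {i j : V} (hj : M i j) :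
    bEarn b M Γ i ≤ Γ j i := by
  by_cases hs : bdeg M i = b i
  · exact bEarn_le hs hj
  · rw [bEarn_unsat hs]; exact (hO.2.2 j i (hO.1.2.1 _ _ hj)).1

theorem bEarn_nonneg (hb : ∀ i, 1 ≤ b i) {Γ : V → V → ℝ} (hO : IsBOutcome G w b M Γ) (i : V) :
    0 ≤ bEarn b M Γ i := by
  by_cases hs : bdeg M i = b i
  · exact le_bEarn hb hs fun j hj => (hO.2.2 j i (hO.1.2.1 _ _ hj)).1
  · rw [bEarn_unsat hs]

open Classical in
theorem bdeg_eq (i : V) : bdeg M i = (Finset.univ.filter (fun j => M i j)).card := by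
  unfold bdeg
  rw [← Set.ncard_coe_finset]
  congr 1
  ext j; simp

/-- under stability the best alternative is at most the earning -/
theorem balt_le (hb : ∀ i, 1 ≤ b i) {Γ : V → V → ℝ} (hO : IsBOutcome G w b M Γ)
    (hS : BStable G w b M Γ) {i j : V} (hij : M i j) : balt G w b M Γ i j ≤ bEarn b M Γ i := by
  classical
  refine bmax_le (bEarn_nonneg hb hO i) ?_
  have hd := hO.1.2.2 i
  rw [bdeg_eq] at hd
  have hjm : j ∈ Finset.univ.filter (fun j => M i j) := by simpa using hij
  have hc := Finset.card_erase_lt_of_mem hjm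
  refine lt_of_le_of_lt (Finset.card_le_card ?_) (hc.trans_le hd)
  intro k hk
  simp only [Finset.mem_filter, Finset.mem_erase, SimpleGraph.mem_neighborFinset, Finset.mem_univ, true_and] at hk ⊢
  refine ⟨hk.1.1, ?_⟩
  by_contra hM
  have := hS i k hk.1.2 hM
  have h3 := hk.2
  unfold pos at h3
  rcases lt_max_iff.1 h3 with h | h
  · linarith
  · linarith [bEarn_nonneg hb hO i]

/-- lower bound on best alternatives -/
theorem le_balt (hb : ∀ i, 1 ≤ b i) {Γ : V → V → ℝ} (hO : IsBOutcome G w b M Γ)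
    (hS : BStable G w b M Γ) {i j k : V} (hs : bdeg M i = b i) (hij : M i j)
    (hadj : G.Adj i k) (hk : ¬ M i k) :
    w i k - bEarn b M Γ k ≤ balt G w b M Γ i j := by
  classical
  have hjm : j ∈ Finset.univ.filter (fun j => M i j) := by simpa using hij
  have hkm : k ∉ (Finset.univ.filter (fun j => M i j)).erase j := by simp [hk]
  have hjk : k ≠ j := by rintro rfl; exact hk hij
  refine le_bmax (by have := hb i; omega)
    (insert k ((Finset.univ.filter (fun j => M i j)).erase j)) ?_ ?_ ?_
  · intro l hl
    simp only [Finset.mem_insert, Finset.mem_filter, Finset.mem_erase, SimpleGraph.mem_neighborFinset, Finset.mem_univ, true_and] at hl ⊢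
    rcases hl with rfl | hl
    · exact ⟨hjk, hadj⟩
    · exact ⟨hl.1, hO.1.1 _ _ hl.2⟩
  · rw [Finset.card_insert_of_notMem hkm, Finset.card_erase_add_one hjm, ← bdeg_eq, hs]
  · intro l hl
    refine le_trans ?_ (le_pos _)
    simp only [Finset.mem_insert, Finset.mem_filter, Finset.mem_erase, Finset.mem_univ, true_and] at hl
    rcases hl with rfl | hl
    · exact le_rfl
    · have h1 := bEarn_le' hO hl.2
      have h2 := bEarn_le' hO (hO.1.2.1 _ _ hl.2)
      have h3 := (hO.2.2 i l hl.2).2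
      have h4 := hS i k hadj hk
      linarith

theorem bstable_comb (hb : ∀ i, 1 ≤ b i) {Γ Γ' : V → V → ℝ} {s t : ℝ} (hs : 0 ≤ s) (ht : 0 ≤ t)
    (i : V) : s * bEarn b M Γ i + t * bEarn b M Γ' i ≤ bEarn b M (s • Γ + t • Γ') i := by
  by_cases h : bdeg M i = b i
  · refine le_bEarn hb h fun j hj => ?_
    have h1 := mul_le_mul_of_nonneg_left (bEarn_le (Γ := Γ) h hj) hs
    have h2 := mul_le_mul_of_nonneg_left (bEarn_le (Γ := Γ') h hj) ht
    simpa using add_le_add h1 h2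
  · simp [bEarn_unsat h]

theorem brebal_stable (hw : GoodW G w) (hb : ∀ i, 1 ≤ b i) {Γ : V → V → ℝ}
    (hO : IsBOutcome G w b M Γ) (hS : BStable G w b M Γ) :
    IsBOutcome G w b M (brebal G w b M Γ) ∧ BStable G w b M (brebal G w b M Γ) := by
  have hsym := hO.1.2.1
  have hlow : ∀ i j, M i j →
      (1 / 2) * (Γ j i + balt G w b M Γ i j) ≤ brebal G w b M Γ j i := by
    intro i j hij
    have h1 := balt_le hb hO hS (hsym _ _ hij)
    have h2 := bEarn_le' hO (hsym _ _ hij)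
    have h3 := (hO.2.2 i j hij).2
    unfold brebal
    rw [if_pos hij]
    linarith
  refine ⟨⟨hO.1, ?_, ?_⟩, ?_⟩
  · intro i j hij
    unfold brebal
    rw [if_neg (fun h => hij (hsym _ _ h))]
  · intro i j hij
    constructor
    · refine le_trans ?_ (hlow j i (hsym _ _ hij))
      have := (hO.2.2 i j hij).1
      have := balt_nonneg (G := G) (w := w) (b := b) (M := M) Γ j i
      linarith
    · unfold brebal
      rw [if_pos hij, if_pos (hsym _ _ hij), hw.1 j i]
      ring
  · have key : ∀ i k, G.Adj i k → ¬ M i k → bdeg M i = b i →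
        (1 / 2) * (bEarn b M Γ i + (w i k - bEarn b M Γ k)) ≤ bEarn b M (brebal G w b M Γ) i := by
      intro i k hadj hk hs
      refine le_bEarn hb hs fun j hj => le_trans ?_ (hlow i j hj)
      have := le_balt hb hO hS hs hj hadj hk
      have := bEarn_le' hO hj
      linarith
    intro i k hadj hk
    have hst := hS i k hadj hk
    have hki : ¬ M k i := fun h => hk (hsym _ _ h)
    have hsw := hw.1 i k
    by_cases hi : bdeg M i = b i <;> by_cases hk' : bdeg M k = b k
    · have h1 := key i k hadj hk hi
      have h2 := key k i hadj.symm hki hk'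
      linarith
    · have h1 := key i k hadj hk hi
      rw [bEarn_unsat hk'] at hst h1 ⊢
      linarith
    · have h1 := key k i hadj.symm hki hk'
      rw [bEarn_unsat hi] at hst h1 ⊢
      linarith
    · rw [bEarn_unsat hi, bEarn_unsat hk'] at hst ⊢
      exact hst

theorem nb_of_stable (hw : GoodW G w) (hb : ∀ i, 1 ≤ b i) (Γ0 : V → V → ℝ)
    (hO : IsBOutcome G w b M Γ0) (hS : BStable G w b M Γ0) :
    ∃ Γ, IsBOutcome G w b M Γ ∧ BStable G w b M Γ ∧ BBalanced G w b M Γ := by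
  classical
  have hM : IsBMatching G b M := hO.1
  set K : Set (V → V → ℝ) := {Γ | IsBOutcome G w b M Γ ∧ BStable G w b M Γ} with hKdef
  have hclosed : IsClosed K := by
    have : K = (⋂ i, ⋂ j, {Γ : V → V → ℝ | ¬ M i j → Γ i j = 0}) ∩
        (⋂ i, ⋂ j, {Γ : V → V → ℝ | M i j → 0 ≤ Γ i j ∧ Γ i j + Γ j i = w i j}) ∩
        (⋂ i, ⋂ j, {Γ : V → V → ℝ | G.Adj i j → ¬ M i j →
          w i j ≤ bEarn b M Γ i + bEarn b M Γ j}) := by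
      ext Γ
      simp only [hKdef, IsBOutcome, BStable, Set.mem_inter_iff, Set.mem_iInter, Set.mem_ofPred_eq]
      tauto
    rw [this]
    refine ((isClosed_iInter fun i => isClosed_iInter fun j => ?_).inter
      (isClosed_iInter fun i => isClosed_iInter fun j => ?_)).inter
      (isClosed_iInter fun i => isClosed_iInter fun j => ?_)
    · by_cases h : M i j
      · simp [h]
      · simp only [h, not_false_eq_true, forall_const]
        exact isClosed_eq (by fun_prop) (by fun_prop)
    · by_cases h : M i j
      · simp only [h, forall_const]
        have c1 : IsClosed {Γ : V → V → ℝ | 0 ≤ Γ i j} := isClosed_le (by fun_prop) (by fun_prop)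
        have c2 : IsClosed {Γ : V → V → ℝ | Γ i j + Γ j i = w i j} :=
          isClosed_eq (by fun_prop) (by fun_prop)
        exact c1.inter c2
      · simp [h]
    · by_cases h : G.Adj i j ∧ ¬ M i j
      · simp only [h.1, h.2, not_false_eq_true, forall_const]
        exact isClosed_le continuous_const ((bEarn_cont hb i).add (bEarn_cont hb j))
      · have : {Γ : V → V → ℝ | G.Adj i j → ¬ M i j →
          w i j ≤ bEarn b M Γ i + bEarn b M Γ j} = Set.univ := by
          ext; simp only [Set.mem_ofPred_eq, Set.mem_univ, iff_true]; tauto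
        rw [this]; exact isClosed_univ
  have hcomp : IsCompact K := by
    refine (isCompact_Icc (a := (fun _ _ => 0 : V → V → ℝ))
      (b := fun i j => if M i j then w i j else 0)).of_isClosed_subset hclosed ?_
    rintro Γ ⟨hΓ, -⟩
    refine ⟨fun i j => ?_, fun i j => ?_⟩
    · by_cases h : M i j
      · exact (hΓ.2.2 i j h).1
      · exact (hΓ.2.1 i j h).ge
    · by_cases h : M i j
      · simp only [h, if_true]
        linarith [(hΓ.2.2 i j h).2, (hΓ.2.2 j i (hM.2.1 _ _ h)).1]
      · simp only [h, if_false]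
        exact (hΓ.2.1 i j h).le
  have hconv : Convex ℝ K := by
    rintro Γ ⟨h1, h2⟩ Γ' ⟨h1', h2'⟩ s t hs ht hst
    refine ⟨⟨hM, ?_, ?_⟩, ?_⟩
    · intro i j h
      simp [h1.2.1 i j h, h1'.2.1 i j h]
    · intro i j h
      have a1 := h1.2.2 i j h
      have a2 := h1'.2.2 i j h
      constructor
      · have := add_nonneg (mul_nonneg hs a1.1) (mul_nonneg ht a2.1)
        simpa using this
      · simp only [Pi.add_apply, Pi.smul_apply, smul_eq_mul]
        have : s * (Γ i j + Γ j i) + t * (Γ' i j + Γ' j i) = (s + t) * w i j := by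
          rw [a1.2, a2.2]; ring
        rw [hst] at this
        linarith
    · intro i j hadj h
      have a1 := mul_le_mul_of_nonneg_left (h2 i j hadj h) hs
      have a2 := mul_le_mul_of_nonneg_left (h2' i j hadj h) ht
      have a3 := bstable_comb (M := M) hb (Γ := Γ) (Γ' := Γ') hs ht i
      have a4 := bstable_comb (M := M) hb (Γ := Γ) (Γ' := Γ') hs ht j
      have a5 : s * w i j + t * w i j = w i j := by rw [← add_mul, hst, one_mul]
      linarith
  obtain ⟨Γ, hΓ, hfix⟩ := nonexp_fixed K hcomp hconv ⟨Γ0, hO, hS⟩ (brebal G w b M)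
    (fun Γ hΓ => brebal_stable hw hb hΓ.1 hΓ.2) (brebal_nonexp hb)
  refine ⟨Γ, hΓ.1, hΓ.2, ?_⟩
  intro i j hij
  change Γ j i - balt G w b M Γ i j = Γ i j - balt G w b M Γ j i
  have e1 : Γ j i = brebal G w b M Γ j i := by rw [hfix]
  have e2 : Γ i j = brebal G w b M Γ i j := by rw [hfix]
  unfold brebal at e1 e2
  rw [if_pos hij] at e1
  rw [if_pos (hM.2.1 _ _ hij), hw.1 j i] at e2
  rw [e1, e2]; ring

theorem nb_of_dual (hw : GoodW G w) (hb : ∀ i, 1 ≤ b i) (hM : IsBMatching G b M) (y : V → ℝ)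
    (hy : ∀ i, 0 ≤ y i) (h1 : ∀ i j, M i j → y i + y j ≤ w i j)
    (h2 : ∀ i j, G.Adj i j → ¬ M i j → w i j ≤ y i + y j)
    (h3 : ∀ i, bdeg M i ≠ b i → y i = 0) :
    ∃ Γ, IsBOutcome G w b M Γ ∧ BStable G w b M Γ ∧ BBalanced G w b M Γ := by
  classical
  refine nb_of_stable hw hb (fun j i => if M i j then (1 / 2) * (w i j + y i - y j) else 0) ?_ ?_
  · refine ⟨hM, ?_, ?_⟩
    · intro i j h
      exact if_neg (fun h' => h (hM.2.1 _ _ h'))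
    · intro i j h
      have hs := hM.2.1 _ _ h
      beta_reduce
      rw [if_pos h, if_pos hs, hw.1 j i]
      refine ⟨?_, by ring⟩
      linarith [h1 i j h, hy i, hy j]
  · have key : ∀ i, y i ≤ bEarn b M
        (fun j i => if M i j then (1 / 2) * (w i j + y i - y j) else 0) i := by
      intro i
      by_cases hs : bdeg M i = b i
      · refine le_bEarn hb hs fun j hj => ?_
        rw [if_pos hj]
        linarith [h1 i j hj]
      · rw [bEarn_unsat hs, h3 i hs]
    intro i j hadj h
    linarith [h2 i j hadj h, key i, key j]
end

section
variable {V : Type*} [Fintype V] [DecidableEq V] {G : SimpleGraph V} [DecidableRel G.Adj]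

/-- The box part of the primal constraints. -/
def BBox {V : Type*} (G : SimpleGraph V) (x : V → V → ℝ) : Prop :=
  (∀ i j, x i j = x j i) ∧ (∀ i j, 0 ≤ x i j) ∧ (∀ i j, x i j ≤ 1) ∧
    (∀ i j, ¬G.Adj i j → x i j = 0)

theorem sum_nbr {x : V → V → ℝ} (hx : ∀ i j, ¬G.Adj i j → x i j = 0) (g : V → ℝ) (i : V) :
    ∑ j ∈ G.neighborFinset i, g j * x i j = ∑ j, g j * x i j := by
  refine Finset.sum_subset (Finset.subset_univ _) fun j _ hj => ?_
  rw [SimpleGraph.mem_neighborFinset] at hj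
  rw [hx i j hj, mul_zero]

theorem sum_nbr_one {x : V → V → ℝ} (hx : ∀ i j, ¬G.Adj i j → x i j = 0) (i : V) :
    ∑ j ∈ G.neighborFinset i, x i j = ∑ j, x i j := by
  simpa using sum_nbr hx (fun _ => 1) i

theorem LPval_eq {x w : V → V → ℝ} (hx : ∀ i j, ¬G.Adj i j → x i j = 0) :
    LPval G w x = (1 / 2) * ∑ i, ∑ j, w i j * x i j := by
  unfold LPval
  congr 1
  exact Finset.sum_congr rfl fun i _ => sum_nbr hx (w i) i

theorem lagrange {w : V → V → ℝ} {b : V → ℕ} (hb : ∀ i, 1 ≤ b i) {xstar : V → V → ℝ}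
    (hopt : BLPOptimal G w b xstar) :
    ∃ y : V → ℝ, (∀ i, 0 ≤ y i) ∧ ∀ x, BBox G x →
      LPval G w x - ∑ i, y i * ((∑ j, x i j) - b i) ≤ LPval G w xstar := by
  set P := LPval G w xstar with hP
  set C : Set ((V → ℝ) × ℝ) := {p | ∃ x, BBox G x ∧ (∀ i, (∑ j, x i j) - b i < p.1 i) ∧
    p.2 < LPval G w x} with hC
  have hCo : IsOpen C := by
    have : C = ⋃ x ∈ {x | BBox G x}, ((⋂ i, {p : (V → ℝ) × ℝ | (∑ j, x i j) - b i < p.1 i}) ∩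
      {p : (V → ℝ) × ℝ | p.2 < LPval G w x}) := by
      ext p; simp [hC]
      exact exists_congr fun x => by tauto
    rw [this]
    refine isOpen_biUnion fun x _ => (isOpen_iInter_of_finite fun i => ?_).inter ?_
    · exact isOpen_lt (by fun_prop) (by fun_prop)
    · exact isOpen_lt (by fun_prop) (by fun_prop)
  have hCc : Convex ℝ C := by
    rintro p ⟨x, hx, h1, h2⟩ q ⟨x', hx', h1', h2'⟩ s t hs ht hst
    have hz : BBox G (s • x + t • x') := by
      refine ⟨fun i j => ?_, fun i j => ?_, fun i j => ?_, fun i j h => ?_⟩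
      · simp [hx.1 i j, hx'.1 i j]
      · simpa using add_nonneg (mul_nonneg hs (hx.2.1 i j)) (mul_nonneg ht (hx'.2.1 i j))
      · have a1 := mul_le_mul_of_nonneg_left (hx.2.2.1 i j) hs
        have a2 := mul_le_mul_of_nonneg_left (hx'.2.2.1 i j) ht
        simp only [Pi.add_apply, Pi.smul_apply, smul_eq_mul]
        linarith
      · simp [hx.2.2.2 i j h, hx'.2.2.2 i j h]
    have hcomb : ∀ a a' c c' : ℝ, a < c → a' < c' → s * a + t * a' < s * c + t * c' := by
      intro a a' c c' h h'
      rcases hs.eq_or_lt with h0 | h0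
      · have : t = 1 := by linarith
        subst this; rw [← h0]; linarith
      · have := mul_lt_mul_of_pos_left h h0
        have := mul_le_mul_of_nonneg_left h'.le ht
        linarith
    refine ⟨_, hz, fun i => ?_, ?_⟩
    · have := hcomb _ _ _ _ (h1 i) (h1' i)
      have e : (∑ j, (s • x + t • x') i j) = s * (∑ j, x i j) + t * (∑ j, x' i j) := by
        simp [Finset.sum_add_distrib, Finset.mul_sum]
      rw [e]
      have e2 : s * (b i : ℝ) + t * b i = b i := by rw [← add_mul, hst, one_mul]
      simp only [Prod.fst_add, Prod.smul_fst, Pi.add_apply, Pi.smul_apply, smul_eq_mul]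
      linarith
    · have := hcomb _ _ _ _ h2 h2'
      have e : LPval G w (s • x + t • x') = s * LPval G w x + t * LPval G w x' := by
        unfold LPval
        simp only [Pi.add_apply, Pi.smul_apply, smul_eq_mul, mul_add, Finset.sum_add_distrib,
          Finset.mul_sum]
        congr 1 <;> refine Finset.sum_congr rfl fun i _ => Finset.sum_congr rfl fun j _ => by ring
      rw [e]
      simpa using this
  have hnot : ((0 : V → ℝ), P) ∉ C := by
    rintro ⟨x, hx, h1, h2⟩
    have hf : BLPFeasible G b x := by
      refine ⟨hx.1, hx.2.1, hx.2.2.1, hx.2.2.2, fun i => ?_⟩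
      rw [sum_nbr_one hx.2.2.2]
      have := h1 i
      simp only [Pi.zero_apply] at this
      linarith
    exact absurd (hopt.2 x hf) (not_le.2 h2)
  obtain ⟨f, hf⟩ := geometric_hahn_banach_open_point hCc hCo hnot
  have hfd : ∀ (u : V → ℝ) (t : ℝ), f (u, t) = ∑ i, u i * f (Pi.single i 1, 0) + t * f (0, 1) := by
    intro u t
    have e : (u, t) = ∑ i, u i • ((Pi.single i 1 : V → ℝ), (0 : ℝ)) + t • ((0 : V → ℝ), (1 : ℝ)) := by
      ext k
      · simp [Prod.fst_sum, Finset.sum_apply, Pi.single_apply]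
      · simp [Prod.snd_sum]
    conv_lhs => rw [e]
    simp only [map_add, map_sum, map_smul, smul_eq_mul]
  set μ := f ((0 : V → ℝ), (1 : ℝ)) with hμ
  set l : V → ℝ := fun i => f (Pi.single i 1, 0) with hl
  have h0box : BBox G (fun _ _ => 0) :=
    ⟨fun _ _ => rfl, fun _ _ => le_rfl, fun _ _ => zero_le_one, fun _ _ _ => rfl⟩
  have h0val : LPval G w (fun _ _ => 0) = 0 := by simp [LPval]
  have hbpos : ∀ i, (0 : ℝ) < b i := fun i => by exact_mod_cast hb i
  have hPnn : 0 ≤ P := by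
    rw [← h0val]
    refine hopt.2 _ ⟨h0box.1, h0box.2.1, h0box.2.2.1, h0box.2.2.2, fun i => ?_⟩
    simp
  have hfP : f ((0 : V → ℝ), P) = P * μ := by rw [hfd]; simp
  rw [hfP] at hf
  have hμpos : 0 < μ := by
    have := hf ((0 : V → ℝ), (-1 : ℝ)) ⟨_, h0box, fun i => by simpa using Nat.lt_of_lt_of_le Nat.zero_lt_one (hb i), by
      rw [h0val]; norm_num⟩
    rw [hfd] at this
    simp only [Pi.zero_apply, zero_mul, Finset.sum_const_zero, zero_add] at this
    by_contra hneg
    push Not at hneg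
    nlinarith
  have hlneg : ∀ i, l i ≤ 0 := by
    intro i
    by_contra hpos
    push Not at hpos
    have key : ∀ s : ℝ, 0 ≤ s → s * l i - μ < P * μ := by
      intro s hs
      have := hf ((Pi.single i s : V → ℝ), (-1 : ℝ)) ⟨_, h0box, fun k => by
        have h1 : (0 : ℝ) ≤ (Pi.single i s : V → ℝ) k := by
          rw [Pi.single_apply]; split_ifs <;> simp [hs]
        have := hbpos k
        simp only [Finset.sum_const_zero]
        linarith, by rw [h0val]; norm_num⟩
      rw [hfd] at this
      simp only [Pi.single_apply, ite_mul, zero_mul, Finset.sum_ite_eq', Finset.mem_univ,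
        if_true] at this
      linarith
    have h1 := key ((P * μ + μ) / l i) (by positivity)
    rw [div_mul_cancel₀ _ hpos.ne'] at h1
    linarith
  refine ⟨fun i => - l i / μ, fun i => div_nonneg (by linarith [hlneg i]) hμpos.le, ?_⟩
  intro x hx
  have hlim : ∑ i, ((∑ j, x i j) - b i) * l i + LPval G w x * μ ≤ P * μ := by
    have key : ∀ ε : ℝ, 0 < ε → ∑ i, ((∑ j, x i j) - b i) * l i + LPval G w x * μ
        ≤ P * μ + ε * (μ - ∑ i, l i) := by
      intro ε hε
      have := hf ((fun i => (∑ j, x i j) - b i + ε), LPval G w x - ε)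
        ⟨x, hx, fun i => by simpa using hε, by simpa using hε⟩
      rw [hfd] at this
      simp only [add_mul, Finset.sum_add_distrib, ← Finset.mul_sum] at this
      linarith
    have hA : 0 ≤ μ - ∑ i, l i := by
      have := Finset.sum_nonpos (fun i (_ : i ∈ Finset.univ) => hlneg i)
      linarith
    refine le_of_forall_pos_le_add fun δ hδ => ?_
    refine (key (δ / (μ - ∑ i, l i + 1)) (by positivity)).trans ?_
    have : δ / (μ - ∑ i, l i + 1) * (μ - ∑ i, l i) ≤ δ := by
      rw [div_mul_eq_mul_div, div_le_iff₀ (by positivity)]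
      nlinarith
    linarith
  have e : ∑ i, (- l i / μ) * ((∑ j, x i j) - b i) = - (∑ i, ((∑ j, x i j) - b i) * l i) / μ := by
    rw [← Finset.sum_neg_distrib, Finset.sum_div]
    exact Finset.sum_congr rfl fun i _ => by ring
  rw [e, neg_div, sub_neg_eq_add]
  have : (∑ i, ((∑ j, x i j) - b i) * l i) / μ ≤ P - LPval G w x := by
    rw [div_le_iff₀ hμpos]; linarith
  linarith

theorem exists_dual {w : V → V → ℝ} (hw : GoodW G w) {b : V → ℕ} (hb : ∀ i, 1 ≤ b i)
    {xstar : V → V → ℝ} (hopt : BLPOptimal G w b xstar) :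
    ∃ y : V → ℝ, (∀ i, 0 ≤ y i) ∧ (∀ i j, G.Adj i j → xstar i j = 1 → y i + y j ≤ w i j) ∧
      (∀ i j, G.Adj i j → xstar i j = 0 → w i j ≤ y i + y j) ∧
      (∀ i, (∑ j, xstar i j) ≠ b i → y i = 0) := by
  classical
  obtain ⟨y, hy, hL⟩ := lagrange hb hopt
  obtain ⟨hsym, hnn, hle1, hoff, hdeg⟩ := hopt.1
  set c : V → V → ℝ := fun i j => w i j - y i - y j with hc
  have hcs : ∀ i j, c i j = c j i := fun i j => by simp only [hc, hw.1 i j]; ring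
  set x' : V → V → ℝ := fun i j =>
    if G.Adj i j then (if 0 < c i j then 1 else if c i j < 0 then 0 else xstar i j) else 0 with hx'
  have hbox : BBox G x' := by
    refine ⟨fun i j => ?_, fun i j => ?_, fun i j => ?_, fun i j h => ?_⟩
    · simp only [hx', G.adj_comm i j, hcs i j, hsym i j]
    · simp only [hx']; split_ifs <;> first | exact hnn i j | norm_num
    · simp only [hx']; split_ifs <;> first | exact hle1 i j | norm_num
    · simp only [hx', h, if_false]
  have hLx : ∀ x : V → V → ℝ, (∀ i j, x i j = x j i) → (∀ i j, ¬G.Adj i j → x i j = 0) →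
      LPval G w x = (1 / 2) * ∑ i, ∑ j, c i j * x i j + ∑ i, y i * ∑ j, x i j := by
    intro x hs h0
    rw [LPval_eq h0]
    have e1 : ∑ i, ∑ j, c i j * x i j = ∑ i, ∑ j, w i j * x i j - ∑ i, ∑ j, y i * x i j
        - ∑ i, ∑ j, y j * x i j := by
      simp only [hc, sub_mul, Finset.sum_sub_distrib]
    have e2 : ∑ i, ∑ j, y j * x i j = ∑ i, ∑ j, y i * x i j := by
      rw [Finset.sum_comm]
      exact Finset.sum_congr rfl fun i _ => Finset.sum_congr rfl fun j _ => by rw [hs]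
    have e3 : ∑ i, y i * ∑ j, x i j = ∑ i, ∑ j, y i * x i j := by
      simp only [Finset.mul_sum]
    rw [e1, e2, e3]; ring
  have hmain := hL x' hbox
  rw [hLx x' hbox.1 hbox.2.2.2, hLx xstar hsym hoff] at hmain
  have hterm : ∀ i j, 0 ≤ c i j * (x' i j - xstar i j) := by
    intro i j
    by_cases hadj : G.Adj i j
    · simp only [hx', hadj, if_true]
      split_ifs with h1 h2
      · exact mul_nonneg h1.le (by linarith [hle1 i j])
      · exact mul_nonneg_of_nonpos_of_nonpos h2.le (by linarith [hnn i j])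
      · simp
    · simp [hx', hadj, hoff i j hadj]
  have hterm2 : ∀ i, 0 ≤ y i * ((b i : ℝ) - ∑ j, xstar i j) := fun i =>
    mul_nonneg (hy i) (by have := hdeg i; rw [sum_nbr_one hoff] at this; linarith)
  have hsum : (1 / 2) * ∑ i, ∑ j, c i j * (x' i j - xstar i j)
      + ∑ i, y i * ((b i : ℝ) - ∑ j, xstar i j) ≤ 0 := by
    simp only [mul_sub, Finset.sum_sub_distrib] at hmain ⊢
    linarith
  have hS1 : 0 ≤ ∑ i, ∑ j, c i j * (x' i j - xstar i j) :=
    Finset.sum_nonneg fun i _ => Finset.sum_nonneg fun j _ => hterm i j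
  have hS2 : 0 ≤ ∑ i, y i * ((b i : ℝ) - ∑ j, xstar i j) :=
    Finset.sum_nonneg fun i _ => hterm2 i
  have hz2 : ∀ i, y i * ((b i : ℝ) - ∑ j, xstar i j) = 0 := by
    have := (Finset.sum_eq_zero_iff_of_nonneg (fun i _ => hterm2 i)).1
      (le_antisymm (by linarith) hS2)
    exact fun i => this i (Finset.mem_univ i)
  have hz1 : ∀ i j, c i j * (x' i j - xstar i j) = 0 := by
    have h1 := (Finset.sum_eq_zero_iff_of_nonneg
      (fun i _ => Finset.sum_nonneg fun j _ => hterm i j)).1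
      (le_antisymm (by linarith) hS1)
    intro i j
    exact (Finset.sum_eq_zero_iff_of_nonneg (fun j _ => hterm i j)).1 (h1 i (Finset.mem_univ i)) j
      (Finset.mem_univ j)
  refine ⟨y, hy, ?_, ?_, ?_⟩
  · intro i j hadj h1
    by_contra hlt
    push Not at hlt
    have hcn : c i j < 0 := by simp only [hc]; linarith
    have := hz1 i j
    simp only [hx', hadj, if_true, not_lt.2 hcn.le, if_false, hcn, h1] at this
    linarith
  · intro i j hadj h1
    by_contra hlt
    push Not at hlt
    have hcn : 0 < c i j := by simp only [hc]; linarith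
    have := hz1 i j
    simp only [hx', hadj, if_true, hcn, h1] at this
    linarith
  · intro i hne
    rcases mul_eq_zero.1 (hz2 i) with h | h
    · exact h
    · exact absurd (by linarith) hne
end

/-- If the primal LP for maximum weight `b`-matching has a unique
optimum and this optimum is integral, then the instance possesses a Nash bargaining
solution: a trade outcome that is both stable and balanced. -/
theorem bmatching_NB_exists
    {V : Type*} [Fintype V] [DecidableEq V] (G : SimpleGraph V) [DecidableRel G.Adj]
    (w : V → V → ℝ) (hw : GoodW G w)
    (b : V → ℕ) (hb : ∀ i, 1 ≤ b i)
    (xstar : V → V → ℝ) (hopt : BLPOptimal G w b xstar) (hint : Integral xstar)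
    (huniq : ∀ x, BLPOptimal G w b x → x = xstar) :
    ∃ (M : V → V → Prop) (Γ : V → V → ℝ),
      IsBOutcome G w b M Γ ∧ BStable G w b M Γ ∧ BBalanced G w b M Γ := by
  classical
  obtain ⟨hsym, hnn, hle1, hoff, hdeg⟩ := hopt.1
  obtain ⟨y, hy, h1, h2, h3⟩ := exists_dual hw hb hopt
  have hadj : ∀ i j, xstar i j = 1 → G.Adj i j := by
    intro i j h
    by_contra hn
    rw [hoff i j hn] at h
    norm_num at h
  have hbd : ∀ i, (bdeg (fun i j => xstar i j = 1) i : ℝ) = ∑ j, xstar i j := by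
    intro i
    rw [bdeg_eq, Finset.card_filter]
    push_cast
    refine Finset.sum_congr rfl fun j _ => ?_
    rcases hint i j with h | h <;> simp [h]
  refine ⟨fun i j => xstar i j = 1, nb_of_dual hw hb ⟨hadj, fun i j h => (hsym j i).trans h, ?_⟩ y hy
    (fun i j h => h1 i j (hadj i j h) h)
    (fun i j ha h => h2 i j ha ((hint i j).resolve_right h)) ?_⟩
  · intro i
    have := hdeg i
    rw [sum_nbr_one hoff, ← hbd] at this
    exact_mod_cast this
  · intro i hne
    refine h3 i ?_
    rw [← hbd]
    exact_mod_cast hne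
end EN
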